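/- arXiv:1009.1128 — 6 statements merged into one kernel-verified Lean document; each statement's English description precedes it below -/
import Mathlib

section
/- Let A be a real m × n matrix and b ∈ ℝ^m, and let k be a natural number. Suppose that every set of 2k columns of A is linearly independent. If x, y ∈ ℝ^n satisfy Ax = b, Ay = b, and both x and y have at most k nonzero entries, then x = y. -/
open Matrix Finset

/-! Two `k`-sparse coefficient vectors are both supported on the union of their supports, a set of
at most `2k` indices, and independence on that set makes the coefficients of a combination unique.
Comparing `x` and `y` directly, rather than showing `x - y = 0`, keeps the argument valid over
semirings. -/

section SparseCombinations

variable {R M ι : Type*} [Semiring R] [AddCommMonoid M] [Module R M] {v : ι → M} {x y : ι →₀ R}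

theorem eq_of_linearCombination_eq_of_linearIndepOn_support_union
    (hv : LinearIndepOn R v (x.support ∪ y.support : Set ι))
    (hxy : Finsupp.linearCombination R v x = Finsupp.linearCombination R v y) :
    x = y :=
  linearIndepOn_iffₛ.mp hv x Set.subset_union_left y Set.subset_union_right hxy

theorem bp_sparse_uniqueness_general {k : ℕ}
    (hv : ∀ S : Finset ι, #S ≤ 2 * k → LinearIndepOn R v S)
    (hxy : Finsupp.linearCombination R v x = Finsupp.linearCombination R v y)
    (hx : #x.support ≤ k) (hy : #y.support ≤ k) :
    x = y := by
  classical
  have card_union_le_two_mul : #(x.support ∪ y.support) ≤ 2 * k :=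
    calc #(x.support ∪ y.support) ≤ #x.support + #y.support := card_union_le _ _
      _ ≤ k + k := add_le_add hx hy
      _ = 2 * k := (two_mul k).symm
  apply eq_of_linearCombination_eq_of_linearIndepOn_support_union _ hxy
  simpa only [coe_union] using hv _ card_union_le_two_mul

end SparseCombinations

theorem card_support_equivFunOnFinite_symm {M ι : Type*} [Zero M] [DecidableEq M] [Fintype ι]
    (x : ι → M) :
    #(Finsupp.equivFunOnFinite.symm x).support = #{i | x i ≠ 0} := by
  congr 1
  ext i
  simp

theorem linearCombination_col_equivFunOnFinite_symm {R m n : Type*} [CommSemiring R]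
    [Fintype n] (A : Matrix m n R) (x : n → R) :
    Finsupp.linearCombination R A.col (Finsupp.equivFunOnFinite.symm x) = A *ᵥ x := by
  ext i
  simp [Finsupp.linearCombination_apply, Finsupp.sum_fintype, mulVec, dotProduct, mul_comm]

/-- If every set of at most `2k` columns of `A` is linearly independent, then the
linear system `A x = b` has at most one `k`-sparse solution. -/
theorem bp_sparse_uniqueness {m n k : ℕ} (A : Matrix (Fin m) (Fin n) ℝ) (b : Fin m → ℝ)
    (hA : ∀ S : Finset (Fin n), S.card ≤ 2 * k →
      LinearIndependent ℝ (fun i : S => Aᵀ (i : Fin n)))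
    (x y : Fin n → ℝ)
    (hx : A.mulVec x = b) (hy : A.mulVec y = b)
    (hxs : (Finset.univ.filter fun i => x i ≠ 0).card ≤ k)
    (hys : (Finset.univ.filter fun i => y i ≠ 0).card ≤ k) :
    x = y := by
  rw [← card_support_equivFunOnFinite_symm] at hxs hys
  rw [← linearCombination_col_equivFunOnFinite_symm] at hx hy
  exact Finsupp.equivFunOnFinite.symm.injective
    (bp_sparse_uniqueness_general hA (hx.trans hy.symm) hxs hys)
end

section
/- Let A be a real m × n matrix and b ∈ ℝ^m such that {x ∈ ℝ^n : Ax = b} is nonempty. Then there exist x* with Ax* = b and λ* with -1 ≤ (Aᵀλ*)ᵢ ≤ 1 for all i such that ‖x*‖₁ = bᵀλ*; consequently x* minimizes ‖x‖₁ over {x : Ax = b} and λ* maximizes bᵀλ over {λ : -1 ≤ Aᵀλ ≤ 1 componentwise}, and the two optimal values coincide (strong LP duality for Basis Pursuit). -/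
open Matrix Finset

/-!
Let `K = ker A` and `A x₀ = b`. A point `k` of `K` closest to `x₀` in the `ℓ¹` norm gives the primal
solution `x* = x₀ - k`, with `‖x*‖₁ = dist (x₀, K)`. By Hahn–Banach, this distance is also the value
at `x₀` of a functional of norm at most `1` vanishing on `K`. Such a functional factors through
`A`, as `v ↦ (A v)ᵀ λ*`, and its norm bound, read off on the standard basis, says that the entries
of `Aᵀ λ*` have modulus at most `1`. Optimality of both is then weak duality.
-/

section Normed

variable {𝕜 E F : Type*} [RCLike 𝕜]

/- Hahn–Banach is applied in `E ⧸ K`, where the class of `x` has norm `infDist x K`. -/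
theorem exists_strongDual_apply_eq_infDist [SeminormedAddCommGroup E] [NormedSpace 𝕜 E]
    (K : Submodule 𝕜 E) (x : E) :
    ∃ f : StrongDual 𝕜 E, (∀ v, ‖f v‖ ≤ ‖v‖) ∧ f x = Metric.infDist x K ∧ ∀ k ∈ K, f k = 0 := by
  obtain ⟨g, hg_norm, hg_apply⟩ := exists_dual_vector'' 𝕜 (K.mkQ x)
  refine ⟨g.comp K.mkQL, fun v => ?_, ?_, fun k hk => ?_⟩
  · calc ‖g (K.mkQ v)‖ ≤ ‖K.mkQ v‖ := by simpa using g.le_of_opNorm_le hg_norm (K.mkQ v)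
      _ ≤ ‖v‖ := Submodule.Quotient.norm_mk_le K v
  · exact hg_apply.trans (congrArg _ (QuotientAddGroup.norm_mk (S := K.toAddSubgroup) x))
  · have hk_mk : K.mkQ k = 0 := (Submodule.Quotient.mk_eq_zero K).2 hk
    exact (congrArg g hk_mk).trans (map_zero g)

theorem exists_dual_comp_eq_norm [NormedAddCommGroup E] [NormedSpace 𝕜 E]
    [FiniteDimensional 𝕜 E] [AddCommGroup F] [Module 𝕜 F] (L : E →ₗ[𝕜] F) (x₀ : E) :
    ∃ (x : E) (φ : Module.Dual 𝕜 F),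
      L x = L x₀ ∧ (∀ v, ‖φ (L v)‖ ≤ ‖v‖) ∧ φ (L x) = ‖x‖ := by
  have := FiniteDimensional.proper_rclike 𝕜 E
  obtain ⟨f, hf_norm, hf_apply, hf_ker⟩ := exists_strongDual_apply_eq_infDist L.ker x₀
  obtain ⟨k, hk, hk_dist⟩ :=
    L.ker.closed_of_finiteDimensional.exists_infDist_eq_dist ⟨0, L.ker.zero_mem⟩ x₀
  obtain ⟨φ, hφ⟩ : f.toLinearMap ∈ L.dualMap.range := by
    rw [LinearMap.range_dualMap_eq_dualAnnihilator_ker, Submodule.mem_dualAnnihilator]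
    exact hf_ker
  have hφ_apply (v : E) : φ (L v) = f v := LinearMap.congr_fun hφ v
  refine ⟨x₀ - k, φ, ?_, fun v => (hφ_apply v).symm ▸ hf_norm v, ?_⟩
  · rw [map_sub, LinearMap.mem_ker.1 hk, sub_zero]
  · rw [hφ_apply, map_sub, hf_ker k hk, sub_zero, hf_apply, hk_dist, dist_eq_norm]

end Normed

section DotProduct

variable {R ι κ : Type*} [Fintype ι] [Fintype κ]

theorem norm_dotProduct_le_sum_norm [NonUnitalSeminormedRing R] (x y : ι → R)
    (hy : ∀ i, ‖y i‖ ≤ 1) : ‖x ⬝ᵥ y‖ ≤ ∑ i, ‖x i‖ :=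
  norm_sum_le_of_le _ fun i _ =>
    (norm_mul_le _ _).trans (mul_le_of_le_one_right (norm_nonneg _) (hy i))

theorem norm_mulVec_dotProduct_le_sum_norm [SeminormedCommRing R] (A : Matrix κ ι R)
    (x : ι → R) (lam : κ → R) (hlam : ∀ i, ‖(Aᵀ *ᵥ lam) i‖ ≤ 1) :
    ‖A *ᵥ x ⬝ᵥ lam‖ ≤ ∑ i, ‖x i‖ := by
  rw [dotProduct_comm, ← dotProduct_transpose_mulVec]
  exact norm_dotProduct_le_sum_norm x _ hlam

end DotProduct

section BasisPursuit

variable {𝕜 ι κ : Type*} [RCLike 𝕜] [Fintype ι] [Fintype κ]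

theorem exists_sum_norm_eq_mulVec_dotProduct (A : Matrix κ ι 𝕜) (x₀ : ι → 𝕜) :
    ∃ (x : ι → 𝕜) (lam : κ → 𝕜), A *ᵥ x = A *ᵥ x₀ ∧ (∀ i, ‖(Aᵀ *ᵥ lam) i‖ ≤ 1) ∧
      ((∑ i, ‖x i‖ : ℝ) : 𝕜) = A *ᵥ x ⬝ᵥ lam := by
  classical
  let L : PiLp 1 (fun _ : ι => 𝕜) →ₗ[𝕜] κ → 𝕜 :=
    A.mulVecLin ∘ₗ (WithLp.linearEquiv 1 𝕜 (ι → 𝕜)).toLinearMap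
  obtain ⟨x, φ, hx, hφ_norm, hφ_apply⟩ := exists_dual_comp_eq_norm L (WithLp.toLp 1 x₀)
  obtain ⟨lam, rfl⟩ := (dotProductEquiv 𝕜 κ).surjective φ
  have hL_apply (v : PiLp 1 (fun _ : ι => 𝕜)) :
      dotProductEquiv 𝕜 κ lam (L v) = A *ᵥ v.ofLp ⬝ᵥ lam := dotProduct_comm _ _
  refine ⟨x.ofLp, lam, hx, fun i => ?_, ?_⟩
  · have hL_single : (Aᵀ *ᵥ lam) i = dotProductEquiv 𝕜 κ lam (L (PiLp.single 1 i 1)) := by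
      rw [hL_apply, PiLp.ofLp_single, mulVec_single_one]
      rfl
    rw [hL_single]
    exact (hφ_norm _).trans_eq ((PiLp.norm_single 1 (fun _ : ι => 𝕜) i 1).trans norm_one)
  · rw [← hL_apply, hφ_apply, PiLp.norm_eq_of_L1]

theorem basisPursuit_strong_duality_general (A : Matrix κ ι 𝕜) (b : κ → 𝕜)
    (hfeas : ∃ x : ι → 𝕜, A *ᵥ x = b) :
    ∃ (xstar : ι → 𝕜) (lamstar : κ → 𝕜),
      A *ᵥ xstar = b ∧
      (∀ i, ‖(Aᵀ *ᵥ lamstar) i‖ ≤ 1) ∧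
      ((∑ i, ‖xstar i‖ : ℝ) : 𝕜) = b ⬝ᵥ lamstar ∧
      (∀ x : ι → 𝕜, A *ᵥ x = b → ∑ i, ‖xstar i‖ ≤ ∑ i, ‖x i‖) ∧
      (∀ lam : κ → 𝕜, (∀ i, ‖(Aᵀ *ᵥ lam) i‖ ≤ 1) →
        RCLike.re (b ⬝ᵥ lam) ≤ RCLike.re (b ⬝ᵥ lamstar)) := by
  obtain ⟨x₀, rfl⟩ := hfeas
  obtain ⟨xstar, lamstar, hx, hlam, hval⟩ := exists_sum_norm_eq_mulVec_dotProduct A x₀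
  have weak_duality {x : ι → 𝕜} {lam : κ → 𝕜} (hx : A *ᵥ x = A *ᵥ x₀)
      (hlam : ∀ i, ‖(Aᵀ *ᵥ lam) i‖ ≤ 1) : RCLike.re (A *ᵥ x₀ ⬝ᵥ lam) ≤ ∑ i, ‖x i‖ :=
    (RCLike.re_le_norm _).trans (hx ▸ norm_mulVec_dotProduct_le_sum_norm A x lam hlam)
  rw [hx] at hval
  have hval_re : ∑ i, ‖xstar i‖ = RCLike.re (A *ᵥ x₀ ⬝ᵥ lamstar) := by
    rw [← hval, RCLike.ofReal_re]
  exact ⟨xstar, lamstar, hx, hlam, hval,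
    fun x hx' => hval_re.trans_le (weak_duality hx' hlam),
    fun lam hlam' => (weak_duality hx hlam').trans_eq hval_re⟩

end BasisPursuit

/-- Strong LP duality for Basis Pursuit: if `{x : A x = b}` is nonempty, there are a primal
feasible `x*` and a dual feasible `λ*` with `‖x*‖₁ = bᵀ λ*`; consequently `x*` is primal
optimal and `λ*` is dual optimal, and the optimal values coincide. -/
theorem basisPursuit_strong_duality {m n : ℕ} (A : Matrix (Fin m) (Fin n) ℝ) (b : Fin m → ℝ)
    (hfeas : ∃ x : Fin n → ℝ, A.mulVec x = b) :
    ∃ (xstar : Fin n → ℝ) (lamstar : Fin m → ℝ),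
      A.mulVec xstar = b ∧
      (∀ i : Fin n, -1 ≤ Aᵀ.mulVec lamstar i ∧ Aᵀ.mulVec lamstar i ≤ 1) ∧
      (∑ i, |xstar i|) = b ⬝ᵥ lamstar ∧
      (∀ x : Fin n → ℝ, A.mulVec x = b → (∑ i, |xstar i|) ≤ ∑ i, |x i|) ∧
      (∀ lam : Fin m → ℝ, (∀ i : Fin n, -1 ≤ Aᵀ.mulVec lam i ∧ Aᵀ.mulVec lam i ≤ 1) →
        b ⬝ᵥ lam ≤ b ⬝ᵥ lamstar) := by
  simpa only [Real.norm_eq_abs, abs_le, RCLike.ofReal_real_eq_id, id_eq, RCLike.re_to_real] using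
    basisPursuit_strong_duality_general A b hfeas
end

section
/- Let A be a real m × n matrix and b ∈ ℝ^m with {x : Ax = b} nonempty. Then there exists δ̄ > 0 such that for all δ with 0 < δ < δ̄, every minimizer of ‖x‖₁ + (δ/2)‖x‖² over {x : Ax = b} is a minimizer of ‖x‖₁ over {x : Ax = b} (exact regularization of Basis Pursuit). -/
open Matrix Finset

/-!
Basis Pursuit is the case of coordinate functionals `g i` in `f x = ∑ i, |g i x|`. This `f` is
affine on each of the finitely many sets on which all the signs of the `g i` are prescribed, and
such a set extends a little beyond both endpoints of any of its chords. If a minimizer `z` of the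
regularized problem lies in such a piece `P`, stationarity of `z` along the chords of `P` gives
`f x - f y = δ ⟪z, y - x⟫` for all `x`, `y` in `P`. Since `f` is bounded below, minimality bounds
`δ ‖z‖ ^ 2`, so `δ z → 0` as `δ → 0`. Hence `f` is constant on every piece that contains regularized
minimizers for arbitrarily small `δ`, and letting `δ → 0` in the minimality inequality shows that
this constant is the minimum of `f`. Finitely many pieces then give a common threshold for `δ`.
-/

open Filter Topology AffineMap
open scoped InnerProductSpace

section Regularization

variable {E : Type*}

/-- The objective `f` with the regularizing term of parameter `δ` added. -/
noncomputable def regularize [Norm E] (f : E → ℝ) (δ : ℝ) (x : E) : ℝ :=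
  f x + δ / 2 * ‖x‖ ^ 2

/-- `P` is an affine piece of `f`: near its endpoints, the line through two points of `P` stays in
`P`, and `f` agrees there with the affine interpolation of its two values. The condition at `t = 0`
covers both endpoints, since `x` and `y` may be exchanged; it replaces relative openness of `P`,
without which only inequalities would hold at a minimizer. -/
def IsAffinePiece [AddCommGroup E] [Module ℝ E] (f : E → ℝ) (P : Set E) : Prop :=
  ∀ x ∈ P, ∀ y ∈ P, ∀ᶠ t in 𝓝 (0 : ℝ),
    lineMap x y t ∈ P ∧ f (lineMap x y t) = lineMap (f x) (f y) t

variable {f : E → ℝ} {C P : Set E} {δ c : ℝ} {x y z : E}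

lemma le_add_of_isMinOn_regularize [Norm E] (hδ : 0 ≤ δ) (hz : IsMinOn (regularize f δ) C z)
    (hx : x ∈ C) : f z ≤ f x + δ / 2 * ‖x‖ ^ 2 :=
  (le_add_of_nonneg_right (by positivity)).trans (isMinOn_iff.1 hz x hx)

lemma mul_norm_sq_le_of_isMinOn_regularize [Norm E] (hc : c ≤ f z)
    (hz : IsMinOn (regularize f δ) C z) (hx : x ∈ C) :
    δ * ‖z‖ ^ 2 ≤ 2 * (f x - c) + δ * ‖x‖ ^ 2 := by
  have hzx : f z + δ / 2 * ‖z‖ ^ 2 ≤ f x + δ / 2 * ‖x‖ ^ 2 := isMinOn_iff.1 hz x hx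
  linarith

variable [NormedAddCommGroup E] [InnerProductSpace ℝ E]

lemma hasDerivAt_norm_sq_lineMap (x y : E) :
    HasDerivAt (fun t : ℝ ↦ ‖lineMap x y t‖ ^ 2) (2 * ⟪x, y - x⟫_ℝ) 0 := by
  simpa using (hasDerivAt_lineMap (a := x) (b := y) (x := (0 : ℝ))).norm_sq

namespace IsAffinePiece

lemma sub_add_mul_inner_eq_zero (hP : IsAffinePiece f P) (hPC : P ⊆ C)
    (hz : IsMinOn (regularize f δ) C z) (hzP : z ∈ P) (hx : x ∈ P) :
    f x - f z + δ * ⟪z, x - z⟫_ℝ = 0 := by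
  have hderiv : HasDerivAt (fun t : ℝ ↦ lineMap (f z) (f x) t + δ / 2 * ‖lineMap z x t‖ ^ 2)
      (f x - f z + δ / 2 * (2 * ⟪z, x - z⟫_ℝ)) 0 :=
    hasDerivAt_lineMap.add ((hasDerivAt_norm_sq_lineMap z x).const_mul (δ / 2))
  have hmin : IsLocalMin (fun t : ℝ ↦ lineMap (f z) (f x) t + δ / 2 * ‖lineMap z x t‖ ^ 2) 0 := by
    filter_upwards [hP z hzP x hx] with t ⟨htP, hft⟩
    simpa [regularize, hft] using isMinOn_iff.1 hz _ (hPC htP)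
  linarith [hmin.hasDerivAt_eq_zero hderiv]

lemma sub_eq_mul_inner (hP : IsAffinePiece f P) (hPC : P ⊆ C) (hz : IsMinOn (regularize f δ) C z)
    (hzP : z ∈ P) (hx : x ∈ P) (hy : y ∈ P) : f x - f y = δ * ⟪z, y - x⟫_ℝ := by
  have hzx := hP.sub_add_mul_inner_eq_zero hPC hz hzP hx
  have hzy := hP.sub_add_mul_inner_eq_zero hPC hz hzP hy
  rw [inner_sub_right] at hzx hzy ⊢
  linarith

lemma sq_sub_le (hP : IsAffinePiece f P) (hPC : P ⊆ C) (hδ : 0 ≤ δ) (hc : c ≤ f z)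
    (hz : IsMinOn (regularize f δ) C z) (hzP : z ∈ P) (hx : x ∈ P) (hy : y ∈ P) :
    (f x - f y) ^ 2 ≤ δ * (2 * (f x - c) + δ * ‖x‖ ^ 2) * ‖y - x‖ ^ 2 := by
  have hnorm := mul_norm_sq_le_of_isMinOn_regularize hc hz (hPC hx)
  calc (f x - f y) ^ 2 = δ ^ 2 * |⟪z, y - x⟫_ℝ| ^ 2 := by
        rw [hP.sub_eq_mul_inner hPC hz hzP hx hy, mul_pow, sq_abs]
    _ ≤ δ ^ 2 * (‖z‖ * ‖y - x‖) ^ 2 := by gcongr; exact abs_real_inner_le_norm _ _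
    _ = δ * (δ * ‖z‖ ^ 2) * ‖y - x‖ ^ 2 := by ring
    _ ≤ δ * (2 * (f x - c) + δ * ‖x‖ ^ 2) * ‖y - x‖ ^ 2 := by gcongr

lemma apply_eq_of_frequently (hP : IsAffinePiece f P) (hPC : P ⊆ C) (hf : BddBelow (f '' C))
    (hfreq : ∃ᶠ δ in 𝓝[>] 0, ∃ z ∈ P, IsMinOn (regularize f δ) C z) (hx : x ∈ P) (hy : y ∈ P) :
    f x = f y := by
  obtain ⟨c, hc⟩ := hf
  have hlim : Tendsto (fun δ : ℝ ↦ δ * (2 * (f x - c) + δ * ‖x‖ ^ 2) * ‖y - x‖ ^ 2)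
      (𝓝[>] 0) (𝓝 0) :=
    tendsto_nhdsWithin_of_tendsto_nhds (Continuous.tendsto' (by fun_prop) _ _ (by simp))
  have hsq : (f x - f y) ^ 2 ≤ 0 := by
    refine ge_of_tendsto_of_frequently hlim ((hfreq.and_eventually self_mem_nhdsWithin).mono ?_)
    rintro δ ⟨⟨z, hzP, hz⟩, hδ⟩
    exact hP.sq_sub_le hPC (le_of_lt hδ) (hc (Set.mem_image_of_mem f (hPC hzP))) hz hzP hx hy
  exact sub_eq_zero.1 (sq_nonpos_iff _ |>.1 hsq)

lemma isMinOn_of_frequently (hP : IsAffinePiece f P) (hPC : P ⊆ C) (hf : BddBelow (f '' C))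
    (hfreq : ∃ᶠ δ in 𝓝[>] 0, ∃ z ∈ P, IsMinOn (regularize f δ) C z) (hx : x ∈ P) :
    IsMinOn f C x := by
  refine isMinOn_iff.2 fun y hy ↦ ?_
  have hlim : Tendsto (fun δ : ℝ ↦ f y + δ / 2 * ‖y‖ ^ 2) (𝓝[>] 0) (𝓝 (f y)) :=
    tendsto_nhdsWithin_of_tendsto_nhds (Continuous.tendsto' (by fun_prop) _ _ (by simp))
  refine ge_of_tendsto_of_frequently hlim ((hfreq.and_eventually self_mem_nhdsWithin).mono ?_)
  rintro δ ⟨⟨z, hzP, hz⟩, hδ⟩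
  rw [hP.apply_eq_of_frequently hPC hf hfreq hx hzP]
  exact le_add_of_isMinOn_regularize (le_of_lt hδ) hz hy

lemma eventually_isMinOn (hP : IsAffinePiece f P) (hPC : P ⊆ C) (hf : BddBelow (f '' C)) :
    ∀ᶠ δ in 𝓝[>] 0, ∀ z ∈ P, IsMinOn (regularize f δ) C z → IsMinOn f C z := by
  by_cases hfreq : ∃ᶠ δ in 𝓝[>] 0, ∃ z ∈ P, IsMinOn (regularize f δ) C z
  · exact .of_forall fun δ z hzP _ ↦ hP.isMinOn_of_frequently hPC hf hfreq hzP
  · filter_upwards [not_frequently.1 hfreq] with δ hδ z hzP hz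
    exact absurd ⟨z, hzP, hz⟩ hδ

end IsAffinePiece

theorem eventually_isMinOn_of_iUnion_isAffinePiece {κ : Type*} [Finite κ] {Q : κ → Set E}
    (hQ : ∀ k, IsAffinePiece f (Q k)) (hC : ⋃ k, Q k = C) (hf : BddBelow (f '' C)) :
    ∀ᶠ δ in 𝓝[>] 0, ∀ z ∈ C, IsMinOn (regularize f δ) C z → IsMinOn f C z := by
  subst hC
  filter_upwards [eventually_all.2 fun k ↦
    (hQ k).eventually_isMinOn (Set.subset_iUnion Q k) hf] with δ hδ z hz
  obtain ⟨k, hk⟩ := Set.mem_iUnion.1 hz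
  exact hδ k z hk

end Regularization

section SignPattern

lemma eventually_sign_lineMap_eq {a b : ℝ} (h : SignType.sign b = SignType.sign a) :
    ∀ᶠ t in 𝓝 (0 : ℝ), SignType.sign (lineMap a b t) = SignType.sign a := by
  have hlim : Tendsto (fun t : ℝ ↦ lineMap a b t) (𝓝 0) (𝓝 a) :=
    Continuous.tendsto' (by fun_prop) _ _ (lineMap_apply_zero a b)
  rcases lt_trichotomy a 0 with ha | rfl | ha
  · filter_upwards [hlim.eventually_lt_const ha] with t ht
    rw [sign_neg ht, sign_neg ha]
  · obtain rfl : b = 0 := by simpa using h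
    simp
  · filter_upwards [hlim.eventually_const_lt ha] with t ht
    rw [sign_pos ht, sign_pos ha]

lemma abs_lineMap_of_sign_eq {a b t : ℝ} (hb : SignType.sign b = SignType.sign a)
    (ht : SignType.sign (lineMap a b t) = SignType.sign a) :
    |lineMap a b t| = lineMap |a| |b| t := by
  rw [← sign_mul_self (lineMap a b t), ← sign_mul_self a, ← sign_mul_self b, ht, hb]
  simp only [lineMap_apply_module, smul_eq_mul]
  ring

variable {E ι : Type*}

section Module

variable [AddCommGroup E] [Module ℝ E]

/-- The cell of `S` on which every affine functional `g i` has the sign `s i`. -/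
def signCell (S : AffineSubspace ℝ E) (g : ι → E →ᵃ[ℝ] ℝ) (s : ι → SignType) : Set E :=
  {x | x ∈ S ∧ ∀ i, SignType.sign (g i x) = s i}

lemma iUnion_signCell (S : AffineSubspace ℝ E) (g : ι → E →ᵃ[ℝ] ℝ) : ⋃ s, signCell S g s = S := by
  ext x
  simp [signCell, ← funext_iff]

lemma isAffinePiece_signCell [Fintype ι] (S : AffineSubspace ℝ E) (g : ι → E →ᵃ[ℝ] ℝ)
    (s : ι → SignType) : IsAffinePiece (fun x ↦ ∑ i, |g i x|) (signCell S g s) := by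
  rintro x ⟨hxS, hx⟩ y ⟨hyS, hy⟩
  have hyx : ∀ i, SignType.sign (g i y) = SignType.sign (g i x) := fun i ↦ (hy i).trans (hx i).symm
  filter_upwards [eventually_all.2 fun i ↦ eventually_sign_lineMap_eq (hyx i)] with t ht
  refine ⟨⟨AffineMap.lineMap_mem t hxS hyS, fun i ↦ ?_⟩, ?_⟩
  · rw [apply_lineMap, ht i, hx i]
  · simp only [apply_lineMap, abs_lineMap_of_sign_eq (hyx _) (ht _)]
    simp only [lineMap_apply_module, smul_eq_mul, sum_add_distrib, mul_sum]

end Module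

theorem basisPursuit_exact_regularization_general [NormedAddCommGroup E] [InnerProductSpace ℝ E]
    [Fintype ι] (S : AffineSubspace ℝ E) (g : ι → E →ᵃ[ℝ] ℝ) :
    ∃ δbar : ℝ, 0 < δbar ∧ ∀ δ : ℝ, 0 < δ → δ < δbar → ∀ z ∈ S,
      IsMinOn (regularize (fun x ↦ ∑ i, |g i x|) δ) S z → IsMinOn (fun x ↦ ∑ i, |g i x|) S z := by
  have hbdd : BddBelow ((fun x ↦ ∑ i, |g i x|) '' (S : Set E)) :=
    ⟨0, by rintro _ ⟨x, -, rfl⟩; positivity⟩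
  obtain ⟨δbar, hpos, h⟩ := mem_nhdsGT_iff_exists_Ioo_subset.1
    (eventually_isMinOn_of_iUnion_isAffinePiece (isAffinePiece_signCell S g)
      (iUnion_signCell S g) hbdd)
  exact ⟨δbar, hpos, fun δ hδ hlt ↦ h ⟨hδ, hlt⟩⟩

end SignPattern

/-- Exact regularization of Basis Pursuit: there is `δ̄ > 0` such that for every
`0 < δ < δ̄`, any minimizer of `‖x‖₁ + (δ/2)‖x‖²` over `{x : A x = b}` is a minimizer
of `‖x‖₁` over `{x : A x = b}`. -/
theorem basisPursuit_exact_regularization {m n : ℕ} (A : Matrix (Fin m) (Fin n) ℝ)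
    (b : Fin m → ℝ) (hfeas : ∃ x : Fin n → ℝ, A.mulVec x = b) :
    ∃ δbar : ℝ, 0 < δbar ∧ ∀ δ : ℝ, 0 < δ → δ < δbar →
      ∀ xstar : Fin n → ℝ,
        (A.mulVec xstar = b ∧
          ∀ x : Fin n → ℝ, A.mulVec x = b →
            (∑ i, |xstar i|) + (δ / 2) * (∑ i, (xstar i) ^ 2)
              ≤ (∑ i, |x i|) + (δ / 2) * (∑ i, (x i) ^ 2)) →
        ∀ x : Fin n → ℝ, A.mulVec x = b → (∑ i, |xstar i|) ≤ ∑ i, |x i| := by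
  let A' := A.mulVecLin ∘ₗ (WithLp.linearEquiv 2 ℝ (Fin n → ℝ)).toLinearMap
  simpa [A', isMinOn_iff, regularize, (WithLp.toLp_surjective 2).forall,
    EuclideanSpace.real_norm_sq_eq] using basisPursuit_exact_regularization_general
      ((affineSpan ℝ {b}).comap A'.toAffineMap) fun i ↦ (EuclideanSpace.projₗ i).toAffineMap
end

section
/- Let A be a real m × n matrix and b ∈ ℝ^m with {x : Ax = b} nonempty. Then there exists δ̄ > 0 such that for all δ with 0 < δ < δ̄, the unique minimizer of ‖x‖₁ + (δ/2)‖x‖² over {x : Ax = b} is the minimizer of ‖x‖ (Euclidean norm) over the set of all minimizers of ‖x‖₁ over {x : Ax = b}; i.e., the regularized problem selects the least ℓ₂-norm solution of Basis Pursuit. -/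
open Matrix Finset

/-!
Sort the feasible points by their sign pattern. If `u` and `x` are feasible with the same pattern,
then the segment from `u` to `x` can be prolonged a little beyond `x` with `‖·‖₁` affine along the
prolonged segment. When `x` minimizes `‖·‖₁ + δ φ`, moving from `x` away from `u` cannot
decrease this objective, so `‖u‖₁ ≤ ‖x‖₁ + O(δ) ≤ ‖y‖₁ + O(δ)` for every feasible `y`. Hence a
pattern shared by some feasible `u` with `‖y‖₁ < ‖u‖₁` cannot occur among the regularized
minimizers for small `δ`, and there are only finitely many patterns.
-/

open Filter Topology Metric
open scoped NNReal

theorem eventually_add_smul_mem {E : Type*} [TopologicalSpace E] [AddCommGroup E] [ContinuousAdd E]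
    [Module ℝ E] [ContinuousSMul ℝ E] {B : Set E} {x : E} (hB : B ∈ 𝓝 x) (v : E) :
    ∀ᶠ t : ℝ in 𝓝[>] 0, x + t • v ∈ B := by
  have hcont : Continuous fun t : ℝ ↦ x + t • v := by fun_prop
  have htendsto : Tendsto (fun t : ℝ ↦ x + t • v) (𝓝 0) (𝓝 x) := by
    simpa only [zero_smul, add_zero] using hcont.tendsto 0
  exact (htendsto.mono_left nhdsWithin_le_nhds).eventually_mem hB

section ExactRegularization

variable {E P : Type*} {cell : E → P} {S : Set E} {f φ : E → ℝ} {δ : ℝ}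

/-- `x` minimizes the regularized objective `f + δ φ` over `S`. -/
def IsRegularizedMin (f φ : E → ℝ) (δ : ℝ) (S : Set E) (x : E) : Prop :=
  x ∈ S ∧ IsMinOn (fun z ↦ f z + δ * φ z) S x

theorem IsRegularizedMin.le_add_mul {x y : E} {c : ℝ} (hδ : 0 ≤ δ)
    (hx : IsRegularizedMin f φ δ S x) (hy : y ∈ S) (hc : c ≤ φ x) :
    f x ≤ f y + δ * (φ y - c) := by
  have hmin : f x + δ * φ x ≤ f y + δ * φ y := hx.2 hy
  linear_combination hmin + δ * hc

theorem IsRegularizedMin.le_of_isMinOn {x z : E} (hδ : 0 < δ) (hx : IsRegularizedMin f φ δ S x)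
    (hz : z ∈ S) (hzmin : IsMinOn f S z) : φ x ≤ φ z := by
  have hmin : f x + δ * φ x ≤ f z + δ * φ z := hx.2 hz
  have hzx : f z ≤ f x := hzmin hx.1
  exact le_of_mul_le_mul_left (by linarith) hδ

variable [SeminormedAddCommGroup E]

theorem exists_ball_of_isRegularizedMin (hf : ∀ c, Bornology.IsBounded {x ∈ S | f x ≤ c})
    (hbdd : BddBelow (φ '' S)) :
    ∃ R, ∀ δ ∈ Set.Ioo (0 : ℝ) 1, ∀ x, IsRegularizedMin f φ δ S x → x ∈ ball 0 R := by
  rcases S.eq_empty_or_nonempty with rfl | ⟨y, hy⟩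
  · exact ⟨0, fun _ _ _ hx ↦ hx.1.elim⟩
  obtain ⟨c, hc⟩ := hbdd
  have hcφ : ∀ x ∈ S, c ≤ φ x := fun x hx ↦ hc (Set.mem_image_of_mem φ hx)
  obtain ⟨R, hR⟩ := (hf (f y + (φ y - c))).subset_ball 0
  refine ⟨R, fun δ hδ x hx ↦ hR ⟨hx.1, ?_⟩⟩
  calc
    f x ≤ f y + δ * (φ y - c) := hx.le_add_mul hδ.1.le hy (hcφ x hx.1)
    _ ≤ f y + (φ y - c) := by
      gcongr
      exact mul_le_of_le_one_left (sub_nonneg.2 (hcφ y hy)) hδ.2.le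

variable [NormedSpace ℝ E]

/-- The fibres of `cell` cut `S` into pieces on which `f` is affine, such as the relatively open
faces of the linearity domains of a polyhedral function. Encoded by the only consequence needed: a
segment between two points `u`, `x` of one piece can be prolonged beyond `x` within `S`, with `f`
affine along the prolongation. -/
def IsAffineOnCells (cell : E → P) (f : E → ℝ) (S : Set E) : Prop :=
  ∀ ⦃u⦄, u ∈ S → ∀ ⦃x⦄, x ∈ S → cell u = cell x → ∀ᶠ t : ℝ in 𝓝[>] 0,
    x + t • (x - u) ∈ S ∧ f (x + t • (x - u)) = f x + t * (f x - f u)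

theorem IsRegularizedMin.le_add_of_cell_eq {B : Set E} {K : ℝ≥0} {u x : E}
    (hcell : IsAffineOnCells cell f S) (hδ : 0 ≤ δ) (hx : IsRegularizedMin f φ δ S x)
    (hu : u ∈ S) (hux : cell u = cell x) (hB : B ∈ 𝓝 x) (hφ : LipschitzOnWith K φ B) :
    f u ≤ f x + δ * (K * ‖x - u‖) := by
  obtain ⟨t, ⟨⟨htS, htf⟩, htB⟩, (ht : 0 < t)⟩ :=
    ((hcell hu hx.1 hux).and (eventually_add_smul_mem hB (x - u))).and self_mem_nhdsWithin |>.exists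
  have hmin : f x + δ * φ x ≤ f x + t * (f x - f u) + δ * φ (x + t • (x - u)) :=
    htf ▸ hx.2 htS
  have hφt : φ (x + t • (x - u)) ≤ φ x + K * (t * ‖x - u‖) := by
    simpa [dist_eq_norm, norm_smul, abs_of_pos ht] using
      hφ.le_add_mul htB (mem_of_mem_nhds hB)
  have hscaled : 0 ≤ t * (f x - f u + δ * (K * ‖x - u‖)) := by
    linear_combination hmin + δ * hφt
  linarith [nonneg_of_mul_nonneg_right hscaled ht]

variable [ProperSpace E]

theorem IsAffineOnCells.eventually_cell_ne_of_lt (hcell : IsAffineOnCells cell f S)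
    (hf : ∀ c, Bornology.IsBounded {x ∈ S | f x ≤ c}) (hφ : LocallyLipschitz φ)
    (hbdd : BddBelow (φ '' S)) {u y : E} (hu : u ∈ S) (hy : y ∈ S) (hyu : f y < f u) :
    ∀ᶠ δ in 𝓝[>] 0, ∀ x, IsRegularizedMin f φ δ S x → cell u ≠ cell x := by
  obtain ⟨R, hR⟩ := exists_ball_of_isRegularizedMin hf hbdd
  obtain ⟨K, hK⟩ := hφ.locallyLipschitzOn.exists_lipschitzOnWith_of_compact
    (isCompact_closedBall (0 : E) R)
  obtain ⟨c, hc⟩ := hbdd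
  set C := φ y - c + K * (R + ‖u‖)
  have hsmall : ∀ᶠ δ in 𝓝[>] (0 : ℝ), δ * C < f u - f y := by
    have hcont : Continuous fun δ : ℝ ↦ δ * C := by fun_prop
    refine (hcont.continuousAt.eventually_lt_const ?_).filter_mono nhdsWithin_le_nhds
    simpa only [zero_mul, sub_pos] using hyu
  filter_upwards [hsmall, Ioo_mem_nhdsGT one_pos] with δ hδC hδ x hx hux
  have hxR : x ∈ ball 0 R := hR δ hδ x hx
  have hdist : ‖x - u‖ ≤ R + ‖u‖ :=
    (norm_sub_le x u).trans (by gcongr; exact (mem_ball_zero_iff.1 hxR).le)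
  have hle : f u ≤ f y + δ * C := calc
    f u ≤ f x + δ * (K * ‖x - u‖) :=
      hx.le_add_of_cell_eq hcell hδ.1.le hu hux (closedBall_mem_nhds_of_mem hxR) hK
    _ ≤ f y + δ * (φ y - c) + δ * (K * (R + ‖u‖)) := by
      gcongr
      · exact hx.le_add_mul hδ.1.le hy (hc (Set.mem_image_of_mem φ hx.1))
      · exact hδ.1.le
    _ = f y + δ * C := by ring
  linarith

theorem IsAffineOnCells.eventually_isMinOn_of_isRegularizedMin [Finite P]
    (hcell : IsAffineOnCells cell f S) (hf : ∀ c, Bornology.IsBounded {x ∈ S | f x ≤ c})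
    (hφ : LocallyLipschitz φ) (hbdd : BddBelow (φ '' S)) :
    ∀ᶠ δ in 𝓝[>] 0, ∀ x, IsRegularizedMin f φ δ S x → IsMinOn f S x := by
  have hcells : ∀ p, ∀ᶠ δ in 𝓝[>] 0, ∀ x, IsRegularizedMin f φ δ S x → cell x = p →
      IsMinOn f S x := by
    intro p
    by_cases hp : ∃ u ∈ S, cell u = p ∧ ∃ y ∈ S, f y < f u
    · obtain ⟨u, hu, rfl, y, hy, hyu⟩ := hp
      filter_upwards [hcell.eventually_cell_ne_of_lt hf hφ hbdd hu hy hyu] with δ hδ x hx hxu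
      exact absurd hxu.symm (hδ x hx)
    · push Not at hp
      exact .of_forall fun δ x hx hxp ↦ hp x hx.1 hxp
  filter_upwards [eventually_all.2 hcells] with δ hδ x hx
  exact hδ (cell x) x hx rfl

end ExactRegularization

section L1Norm

theorem eventually_abs_add_mul_sub {u x : ℝ} (hux : SignType.sign u = SignType.sign x) :
    ∀ᶠ t in 𝓝[>] 0, |x + t * (x - u)| = |x| + t * (|x| - |u|) := by
  rcases lt_trichotomy x 0 with hx | rfl | hx
  · have hu : u < 0 := sign_eq_neg_one_iff.1 (hux.trans (sign_neg hx))
    filter_upwards [eventually_add_smul_mem (Iio_mem_nhds hx) (x - u)] with t ht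
    rw [abs_of_neg ht, abs_of_neg hx, abs_of_neg hu]
    ring
  · have hu : u = 0 := sign_eq_zero_iff.1 (hux.trans sign_zero)
    simp [hu]
  · have hu : 0 < u := sign_eq_one_iff.1 (hux.trans (sign_pos hx))
    filter_upwards [eventually_add_smul_mem (Ioi_mem_nhds hx) (x - u)] with t ht
    rw [abs_of_pos ht, abs_of_pos hx, abs_of_pos hu]

variable {ι : Type*} [Fintype ι]

/-- The `ℓ¹` norm on `ι → ℝ`, as a plain function because the norm instance of `ι → ℝ` is the sup
norm. -/
def l1Norm (x : ι → ℝ) : ℝ := ∑ i, |x i|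

theorem norm_le_l1Norm (x : ι → ℝ) : ‖x‖ ≤ l1Norm x :=
  (pi_norm_le_iff_of_nonneg (sum_nonneg fun _ _ ↦ abs_nonneg _)).2 fun i ↦
    single_le_sum (f := fun i ↦ |x i|) (fun _ _ ↦ abs_nonneg _) (mem_univ i)

theorem isBounded_setOf_l1Norm_le (S : Set (ι → ℝ)) (c : ℝ) :
    Bornology.IsBounded {x ∈ S | l1Norm x ≤ c} :=
  isBounded_iff_forall_norm_le.2 ⟨c, fun x hx ↦ (norm_le_l1Norm x).trans hx.2⟩

theorem isAffineOnCells_l1Norm (S : AffineSubspace ℝ (ι → ℝ)) :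
    IsAffineOnCells (fun x i ↦ SignType.sign (x i)) l1Norm (S : Set (ι → ℝ)) := by
  intro u hu x hx hux
  have habs : ∀ᶠ t : ℝ in 𝓝[>] 0, ∀ i, |x i + t * (x i - u i)| = |x i| + t * (|x i| - |u i|) :=
    eventually_all.2 fun i ↦ eventually_abs_add_mul_sub (congrFun hux i)
  filter_upwards [habs] with t ht
  constructor
  · simpa only [vsub_eq_sub, vadd_eq_add, add_comm, SetLike.mem_coe] using
      S.smul_vsub_vadd_mem t hx hu hx
  · simp only [l1Norm, Pi.add_apply, Pi.smul_apply, Pi.sub_apply, smul_eq_mul, ht,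
      sum_add_distrib, ← mul_sum, sum_sub_distrib]

end L1Norm

/-- The affine subspace of solutions of `A x = b`, empty if there are none. -/
def solutionSubspace {k V W : Type*} [Ring k] [AddCommGroup V] [Module k V] [AddCommGroup W]
    [Module k W] (A : V →ₗ[k] W) (b : W) : AffineSubspace k V where
  carrier := {x | A x = b}
  smul_vsub_vadd_mem' t u v w (hu : A u = b) (hv : A v = b) (hw : A w = b) :=
    show A (t • (u - v) + w) = b by simp [hu, hv, hw]

theorem locallyLipschitz_sum_sq {ι : Type*} [Fintype ι] :
    LocallyLipschitz fun x : ι → ℝ ↦ ∑ i, x i ^ 2 :=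
  ContDiff.locallyLipschitz (𝕂 := ℝ) (by fun_prop)

theorem basisPursuit_regularization_selects_least_l2_general {ι : Type*} [Fintype ι]
    (S : AffineSubspace ℝ (ι → ℝ)) {φ : (ι → ℝ) → ℝ} (hφ : LocallyLipschitz φ)
    (hbdd : BddBelow (φ '' S)) :
    ∃ δbar : ℝ, 0 < δbar ∧ ∀ δ, 0 < δ → δ < δbar → ∀ x, IsRegularizedMin l1Norm φ δ S x →
      IsMinOn l1Norm S x ∧ ∀ z ∈ S, IsMinOn l1Norm S z → φ x ≤ φ z := by
  obtain ⟨δbar, hδbar, hmin⟩ := mem_nhdsGT_iff_exists_Ioo_subset.1 <|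
    (isAffineOnCells_l1Norm S).eventually_isMinOn_of_isRegularizedMin
      (isBounded_setOf_l1Norm_le (S : Set (ι → ℝ))) hφ hbdd
  exact ⟨δbar, hδbar, fun δ hδ hδlt x hx ↦
    ⟨hmin ⟨hδ, hδlt⟩ x hx, fun _ hz hzmin ↦ hx.le_of_isMinOn hδ hz hzmin⟩⟩

/-- Exact regularization selects the least `ℓ²`-norm solution of Basis Pursuit: there is
`δ̄ > 0` such that for every `0 < δ < δ̄`, any minimizer of `‖x‖₁ + (δ/2)‖x‖²` over
`{x : A x = b}` minimizes `‖x‖₁` over `{x : A x = b}` and has the least Euclidean norm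
among all minimizers of `‖x‖₁` over `{x : A x = b}`. -/
theorem basisPursuit_regularization_selects_least_l2 {m n : ℕ} (A : Matrix (Fin m) (Fin n) ℝ)
    (b : Fin m → ℝ) (hfeas : ∃ x : Fin n → ℝ, A.mulVec x = b) :
    ∃ δbar : ℝ, 0 < δbar ∧ ∀ δ : ℝ, 0 < δ → δ < δbar →
      ∀ xstar : Fin n → ℝ,
        (A.mulVec xstar = b ∧
          ∀ x : Fin n → ℝ, A.mulVec x = b →
            (∑ i, |xstar i|) + (δ / 2) * (∑ i, (xstar i) ^ 2)
              ≤ (∑ i, |x i|) + (δ / 2) * (∑ i, (x i) ^ 2)) →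
        ((A.mulVec xstar = b ∧
            ∀ x : Fin n → ℝ, A.mulVec x = b → (∑ i, |xstar i|) ≤ ∑ i, |x i|) ∧
          ∀ z : Fin n → ℝ,
            (A.mulVec z = b ∧ ∀ x : Fin n → ℝ, A.mulVec x = b → (∑ i, |z i|) ≤ ∑ i, |x i|) →
            Real.sqrt (∑ i, (xstar i) ^ 2) ≤ Real.sqrt (∑ i, (z i) ^ 2)) := by
  obtain ⟨δbar, hδbar, hsel⟩ := basisPursuit_regularization_selects_least_l2_general
    (solutionSubspace A.mulVecLin b) locallyLipschitz_sum_sq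
    ⟨0, Set.forall_mem_image.2 fun x _ ↦ by positivity⟩
  refine ⟨2 * δbar, by positivity, fun δ hδ hδlt x hx ↦ ?_⟩
  obtain ⟨hmin, hleast⟩ := hsel (δ / 2) (by linarith) (by linarith) x hx
  exact ⟨⟨hx.1, fun _ hy ↦ hmin hy⟩, fun z hz ↦ Real.sqrt_le_sqrt (hleast z hz.1 hz.2)⟩
end

section
/- Let A be a real m × n matrix, b ∈ ℝ^m, and δ > 0. For y ∈ ℝ^m let x(y) denote the unique minimizer over x ∈ ℝ^n of ‖x‖₁ + (Aᵀy)ᵀx + (δ/2)‖x‖², and define the dual function L(y) = -bᵀy + inf_x (‖x‖₁ + (Aᵀy)ᵀx + (δ/2)‖x‖²). If y* maximizes L over ℝ^m, then A x(y*) = b and x(y*) minimizes ‖x‖₁ + (δ/2)‖x‖² over {x : Ax = b}. -/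
open Matrix Finset

/-!
Moving the dual variable from the maximizer `y₀` to `y₀ + t • η` perturbs the objective of the inner
problem by the linear term `t * ⟨η, A x⟩`. By strong convexity this objective grows quadratically
away from its minimizer `x₀`, and the growth absorbs the variation of the perturbation up to
`O(t ^ 2)`, so `L (y₀ + t • η) ≥ L y₀ + t * ⟨η, A x₀ - b⟩ - O(t ^ 2)`. Since `y₀` maximizes `L`, the
linear coefficient vanishes for every `η`, that is, `A x₀ = b`. On the feasible set the multiplier
term is constant, so minimizing the inner objective minimizes the primal one.
-/

open Set Filter Topology

section StrongConvexity

variable {E : Type*} [NormedAddCommGroup E]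

theorem uniformConvexOn_add_le_of_isMinOn [NormedSpace ℝ E] {s : Set E} {ω : ℝ → ℝ} {f : E → ℝ}
    {x₀ x : E} (hf : UniformConvexOn s ω f) (hmin : IsMinOn f s x₀) (hx₀ : x₀ ∈ s) (hx : x ∈ s) :
    f x₀ + ω ‖x - x₀‖ ≤ f x := by
  have hsegment : ∀ t ∈ Ioo (0 : ℝ) 1, f x₀ + (1 - t) * ω ‖x - x₀‖ ≤ f x := by
    rintro t ⟨ht₀, ht₁⟩
    have hle : f x₀ ≤ t * f x + (1 - t) * f x₀ - t * (1 - t) * ω ‖x - x₀‖ :=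
      (hmin (hf.1 hx hx₀ ht₀.le (sub_nonneg.2 ht₁.le) (add_sub_cancel t 1))).trans
        (hf.2 hx hx₀ ht₀.le (sub_nonneg.2 ht₁.le) (add_sub_cancel t 1))
    refine le_of_mul_le_mul_left ?_ ht₀
    linarith
  have hlim : Tendsto (fun t : ℝ ↦ f x₀ + (1 - t) * ω ‖x - x₀‖) (𝓝[>] 0)
      (𝓝 (f x₀ + ω ‖x - x₀‖)) := by
    refine Tendsto.mono_left (Continuous.tendsto' ?_ _ _ ?_) nhdsWithin_le_nhds
    · fun_prop
    · simp
  exact le_of_tendsto hlim (mem_of_superset (Ioo_mem_nhdsGT one_pos) hsegment)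

theorem strongConvexOn_norm_add_norm_sq [InnerProductSpace ℝ E] (μ : ℝ) :
    StrongConvexOn univ μ fun x : E ↦ ‖x‖ + μ / 2 * ‖x‖ ^ 2 := by
  simpa only [strongConvexOn_iff_convex, add_sub_cancel_right] using convexOn_univ_norm

end StrongConvexity

section Pi

variable {ι : Type*} [Fintype ι] {E : ι → Type*} [∀ i, NormedAddCommGroup (E i)]

theorem pi_norm_sq_le_sum_norm_sq (x : ∀ i, E i) : ‖x‖ ^ 2 ≤ ∑ i, ‖x i‖ ^ 2 := by
  have hsum : 0 ≤ ∑ i, ‖x i‖ ^ 2 := sum_nonneg fun i _ ↦ sq_nonneg _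
  have hnorm : ‖x‖ ≤ √(∑ i, ‖x i‖ ^ 2) := (pi_norm_le_iff_of_nonneg (Real.sqrt_nonneg _)).2 fun i ↦
    Real.le_sqrt_of_sq_le <|
      single_le_sum (f := fun j ↦ ‖x j‖ ^ 2) (fun j _ ↦ sq_nonneg _) (Finset.mem_univ i)
  exact (Real.le_sqrt (norm_nonneg x) hsum).1 hnorm

theorem strongConvexOn_sum_pi [∀ i, NormedSpace ℝ (E i)] {μ : ℝ} (hμ : 0 ≤ μ)
    {g : ∀ i, E i → ℝ} (hg : ∀ i, StrongConvexOn univ μ (g i)) :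
    StrongConvexOn univ μ fun x : ∀ i, E i ↦ ∑ i, g i (x i) := by
  refine ⟨convex_univ, fun x _ y _ a b ha hb hab ↦ ?_⟩
  calc ∑ i, g i ((a • x + b • y) i)
      ≤ ∑ i, (a * g i (x i) + b * g i (y i) - a * b * (μ / 2 * ‖(x - y) i‖ ^ 2)) :=
        sum_le_sum fun i _ ↦ (hg i).2 (mem_univ _) (mem_univ _) ha hb hab
    _ = a * ∑ i, g i (x i) + b * ∑ i, g i (y i) - a * b * (μ / 2 * ∑ i, ‖(x - y) i‖ ^ 2) := by
        simp only [sum_sub_distrib, sum_add_distrib, mul_sum]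
    _ ≤ a * ∑ i, g i (x i) + b * ∑ i, g i (y i) - a * b * (μ / 2 * ‖x - y‖ ^ 2) := by
        gcongr
        exact pi_norm_sq_le_sum_norm_sq (x - y)

end Pi

theorem neg_norm_sq_div_le_norm_sq_add {E : Type*} [SeminormedAddCommGroup E] [NormedSpace ℝ E]
    {μ : ℝ} (hμ : 0 < μ) (ℓ : StrongDual ℝ E) (v : E) :
    -(‖ℓ‖ ^ 2 / (2 * μ)) ≤ μ / 2 * ‖v‖ ^ 2 + ℓ v := by
  have hℓv : -(‖ℓ‖ * ‖v‖) ≤ ℓ v := neg_le_of_abs_le (ℓ.le_opNorm v)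
  have hsq : μ / 2 * ‖v‖ ^ 2 - ‖ℓ‖ * ‖v‖ + ‖ℓ‖ ^ 2 / (2 * μ) = (μ * ‖v‖ - ‖ℓ‖) ^ 2 / (2 * μ) := by
    field_simp
    ring
  have hnonneg : 0 ≤ (μ * ‖v‖ - ‖ℓ‖) ^ 2 / (2 * μ) := by positivity
  linarith

theorem eq_zero_of_forall_mul_le_mul_sq {a C : ℝ} (h : ∀ t : ℝ, t * a ≤ C * t ^ 2) : a = 0 := by
  have hdiscrim : discrim C (-a) 0 ≤ 0 := discrim_le_zero fun t ↦ by linarith [h t]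
  simpa [discrim, sq_nonpos_iff] using hdiscrim

theorem isMinOn_preimage_singleton_of_isMinOn_add_comp {α β : Type*} {φ : α → ℝ} {T : α → β}
    {g : β → ℝ} {x₀ : α} (h : IsMinOn (fun x ↦ φ x + g (T x)) univ x₀) :
    IsMinOn φ (T ⁻¹' {T x₀}) x₀ := by
  intro x (hx : T x = T x₀)
  have hle : φ x₀ + g (T x₀) ≤ φ x + g (T x) := h (mem_univ x)
  rw [hx] at hle
  exact le_of_add_le_add_right hle

section Duality

variable {E F Y : Type*} [NormedAddCommGroup E] [NormedSpace ℝ E]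
  [AddCommGroup F] [Module ℝ F] [TopologicalSpace F] [AddCommGroup Y] [Module ℝ Y]

/-- The objective of the inner problem when the constraint `A x = b` of minimizing `φ` is relaxed
with multiplier `y`. Multipliers act on `F` through an arbitrary pairing `B`, and the term `-B y b`
of the Lagrangian, constant in `x`, is left to `dualFunction`. -/
def relaxedObjective (φ : E → ℝ) (A : E →L[ℝ] F) (B : Y →ₗ[ℝ] StrongDual ℝ F) (y : Y) (x : E) : ℝ :=
  φ x + B y (A x)

/-- The Lagrange dual function of the problem of minimizing `φ x` subject to `A x = b`. The infimum
is real-valued, hence `0` where the relaxed objective is unbounded below. -/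
noncomputable def dualFunction (φ : E → ℝ) (A : E →L[ℝ] F) (b : F) (B : Y →ₗ[ℝ] StrongDual ℝ F)
    (y : Y) : ℝ :=
  -B y b + ⨅ x, relaxedObjective φ A B y x

variable {φ : E → ℝ} {μ : ℝ} {A : E →L[ℝ] F} {b : F} {B : Y →ₗ[ℝ] StrongDual ℝ F} {y₀ : Y} {x₀ : E}

theorem relaxedObjective_add (φ : E → ℝ) (A : E →L[ℝ] F) (B : Y →ₗ[ℝ] StrongDual ℝ F) (y η : Y)
    (x : E) :
    relaxedObjective φ A B (y + η) x = relaxedObjective φ A B y x + B η (A x) := by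
  simp only [relaxedObjective, map_add, _root_.add_apply, add_assoc]

theorem strongConvexOn_relaxedObjective {s : Set E} (hφ : StrongConvexOn s μ φ) (A : E →L[ℝ] F)
    (B : Y →ₗ[ℝ] StrongDual ℝ F) (y : Y) : StrongConvexOn s μ (relaxedObjective φ A B y) := by
  have hlinear : ConvexOn ℝ s ((B y).comp A) := ((B y).comp A).toLinearMap.convexOn hφ.1
  simpa only [add_zero] using! UniformConvexOn.add hφ hlinear.uniformConvexOn_zero

theorem dualFunction_eq_of_isMinOn (b : F) (hx₀ : IsMinOn (relaxedObjective φ A B y₀) univ x₀) :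
    dualFunction φ A b B y₀ = -B y₀ b + relaxedObjective φ A B y₀ x₀ := by
  have hleast : IsLeast (range (relaxedObjective φ A B y₀)) (relaxedObjective φ A B y₀ x₀) :=
    ⟨mem_range_self x₀, forall_mem_range.2 (isMinOn_univ_iff.1 hx₀)⟩
  rw [dualFunction, iInf, hleast.csInf_eq]

theorem le_relaxedObjective_add (hμ : 0 < μ) (hφ : StrongConvexOn univ μ φ)
    (hx₀ : IsMinOn (relaxedObjective φ A B y₀) univ x₀) (η : Y) (x : E) :
    relaxedObjective φ A B y₀ x₀ + B η (A x₀) - ‖(B η).comp A‖ ^ 2 / (2 * μ)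
      ≤ relaxedObjective φ A B (y₀ + η) x := by
  have hgrowth : relaxedObjective φ A B y₀ x₀ + μ / 2 * ‖x - x₀‖ ^ 2
      ≤ relaxedObjective φ A B y₀ x :=
    uniformConvexOn_add_le_of_isMinOn (strongConvexOn_relaxedObjective hφ A B y₀) hx₀
      (mem_univ x₀) (mem_univ x)
  have habsorb : -(‖(B η).comp A‖ ^ 2 / (2 * μ)) ≤
      μ / 2 * ‖x - x₀‖ ^ 2 + (B η (A x) - B η (A x₀)) := by
    simpa only [ContinuousLinearMap.comp_apply, map_sub] using
      neg_norm_sq_div_le_norm_sq_add hμ ((B η).comp A) (x - x₀)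
  rw [relaxedObjective_add]
  linarith

theorem le_dualFunction_add (hμ : 0 < μ) (hφ : StrongConvexOn univ μ φ) (b : F)
    (hx₀ : IsMinOn (relaxedObjective φ A B y₀) univ x₀) (η : Y) :
    dualFunction φ A b B y₀ + B η (A x₀ - b) - ‖(B η).comp A‖ ^ 2 / (2 * μ)
      ≤ dualFunction φ A b B (y₀ + η) := by
  have hinf := le_ciInf (le_relaxedObjective_add hμ hφ hx₀ η)
  rw [dualFunction_eq_of_isMinOn b hx₀, dualFunction, map_add, _root_.add_apply, map_sub]
  linarith

theorem pairing_residual_eq_zero_of_isMaxOn_dualFunction (hμ : 0 < μ)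
    (hφ : StrongConvexOn univ μ φ) (hy₀ : IsMaxOn (dualFunction φ A b B) univ y₀)
    (hx₀ : IsMinOn (relaxedObjective φ A B y₀) univ x₀) (η : Y) : B η (A x₀ - b) = 0 := by
  refine eq_zero_of_forall_mul_le_mul_sq (C := ‖(B η).comp A‖ ^ 2 / (2 * μ)) fun t ↦ ?_
  have hmax : dualFunction φ A b B (y₀ + t • η) ≤ dualFunction φ A b B y₀ := hy₀ (mem_univ _)
  have hlower := le_dualFunction_add hμ hφ b hx₀ (t • η)
  have hnorm : ‖(B (t • η)).comp A‖ ^ 2 = t ^ 2 * ‖(B η).comp A‖ ^ 2 := by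
    rw [map_smul, ContinuousLinearMap.smul_comp, norm_smul, mul_pow, Real.norm_eq_abs, sq_abs]
  rw [hnorm, map_smul, _root_.smul_apply, smul_eq_mul] at hlower
  rw [div_mul_eq_mul_div, mul_comm (_ ^ 2) (t ^ 2)]
  linarith

theorem dual_maximizer_recovers_primal_general (hμ : 0 < μ) (hφ : StrongConvexOn univ μ φ)
    (hB : ∀ z, (∀ y, B y z = 0) → z = 0) (hy₀ : IsMaxOn (dualFunction φ A b B) univ y₀)
    (hx₀ : IsMinOn (relaxedObjective φ A B y₀) univ x₀) :
    A x₀ = b ∧ IsMinOn φ {x | A x = b} x₀ := by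
  obtain rfl : A x₀ = b := sub_eq_zero.1 <|
    hB _ (pairing_residual_eq_zero_of_isMaxOn_dualFunction hμ hφ hy₀ hx₀)
  exact ⟨rfl, isMinOn_preimage_singleton_of_isMinOn_add_comp hx₀⟩

end Duality

section Coordinates

variable {ι κ : Type*} [Fintype ι] [Fintype κ]

/-- Strong convexity in the sup norm of `ι → ℝ` is weaker than in the Euclidean norm, but suffices
because the duality argument works for every norm. -/
theorem strongConvexOn_sum_abs_add_sum_sq {δ : ℝ} (hδ : 0 ≤ δ) :
    StrongConvexOn univ δ fun x : ι → ℝ ↦ (∑ i, |x i|) + δ / 2 * ∑ i, x i ^ 2 := by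
  simpa only [Real.norm_eq_abs, sq_abs, sum_add_distrib, mul_sum] using
    strongConvexOn_sum_pi hδ fun _ : ι ↦ strongConvexOn_norm_add_norm_sq (E := ℝ) δ

/-- The dot product as a pairing of `ι → ℝ` with itself, continuous in the second argument. -/
noncomputable def dotProductPairing (ι : Type*) [Fintype ι] :
    (ι → ℝ) →ₗ[ℝ] StrongDual ℝ (ι → ℝ) :=
  LinearMap.toContinuousLinearMap.toLinearMap ∘ₗ dotProductBilin ℝ ℝ

theorem dotProductPairing_apply (y z : ι → ℝ) : dotProductPairing ι y z = y ⬝ᵥ z := rfl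

theorem eq_zero_of_forall_dotProductPairing_eq_zero (z : ι → ℝ)
    (hz : ∀ y, dotProductPairing ι y z = 0) : z = 0 :=
  dotProduct_eq_zero z fun y ↦ by rw [dotProduct_comm, ← dotProductPairing_apply, hz]

theorem relaxedObjective_mulVecLin (φ : (ι → ℝ) → ℝ) (A : Matrix κ ι ℝ) (y : κ → ℝ) (x : ι → ℝ) :
    relaxedObjective φ A.mulVecLin.toContinuousLinearMap (dotProductPairing κ) y x =
      φ x + Aᵀ.mulVec y ⬝ᵥ x := by
  rw [relaxedObjective, dotProductPairing_apply, LinearMap.coe_toContinuousLinearMap',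
    mulVecLin_apply, dotProduct_mulVec, mulVec_transpose]

end Coordinates

/-- Recovering the regularized Basis Pursuit solution from a dual maximizer: if `y*`
maximizes the dual function `L(y) = -bᵀy + inf_x (‖x‖₁ + (Aᵀy)ᵀx + (δ/2)‖x‖²)` and
`x*` minimizes the inner problem at `y*`, then `A x* = b` and `x*` minimizes
`‖x‖₁ + (δ/2)‖x‖²` over `{x : A x = b}`. -/
theorem dual_maximizer_recovers_primal {m n : ℕ} (A : Matrix (Fin m) (Fin n) ℝ)
    (b : Fin m → ℝ) (δ : ℝ) (hδ : 0 < δ)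
    (f : (Fin m → ℝ) → (Fin n → ℝ) → ℝ)
    (hf : ∀ y x, f y x =
      (∑ i, |x i|) + (Aᵀ.mulVec y) ⬝ᵥ x + (δ / 2) * (∑ i, (x i) ^ 2))
    (L : (Fin m → ℝ) → ℝ)
    (hL : ∀ y, L y = -(b ⬝ᵥ y) + ⨅ x : Fin n → ℝ, f y x)
    (ystar : Fin m → ℝ) (hystar : ∀ y : Fin m → ℝ, L y ≤ L ystar)
    (xstar : Fin n → ℝ) (hxstar : ∀ x : Fin n → ℝ, f ystar xstar ≤ f ystar x) :
    A.mulVec xstar = b ∧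
      ∀ x : Fin n → ℝ, A.mulVec x = b →
        (∑ i, |xstar i|) + (δ / 2) * (∑ i, (xstar i) ^ 2)
          ≤ (∑ i, |x i|) + (δ / 2) * (∑ i, (x i) ^ 2) := by
  let φ : (Fin n → ℝ) → ℝ := fun x ↦ (∑ i, |x i|) + δ / 2 * ∑ i, x i ^ 2
  let T := A.mulVecLin.toContinuousLinearMap
  obtain rfl : f = relaxedObjective φ T (dotProductPairing (Fin m)) := by
    ext y x
    rw [hf, relaxedObjective_mulVecLin, add_right_comm]
  obtain rfl : L = dualFunction φ T b (dotProductPairing (Fin m)) := by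
    ext y
    rw [hL, dualFunction, dotProductPairing_apply, dotProduct_comm]
  exact dual_maximizer_recovers_primal_general hδ (strongConvexOn_sum_abs_add_sum_sq hδ.le)
    eq_zero_of_forall_dotProductPairing_eq_zero (isMaxOn_univ_iff.2 hystar)
    (isMinOn_univ_iff.2 hxstar)
end

section
/- Let A be a real m × n matrix, b ∈ ℝ^m, v ∈ ℝ^n, and c > 0 with {x : Ax = b} nonempty. For λ ∈ ℝ^m let x(λ) ∈ ℝ^n be the unique coordinatewise minimizer of xᵢ ↦ |xᵢ| + (v - Aᵀλ)ᵢ xᵢ + c xᵢ². If λ* maximizes the dual objective λ ↦ λᵀb + Σᵢ inf_{t} (|t| + (v - Aᵀλ)ᵢ t + c t²) over ℝ^m, then A x(λ*) = b and x(λ*) is the unique minimizer of ‖x‖₁ + vᵀx + c‖x‖² over {x : Ax = b}. -/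
open Matrix Finset

/-!
For the primal objective `f`, the dual function is the infimum over `z` of the Lagrangian
`L λ z = f z + λᵀ(b - A z)`, attained at `x(λ)`. Expanding the square about `x(λ*)`, where the
first-order condition holds, gives the growth `L λ* z ≥ L λ* x(λ*) + c‖z - x(λ*)‖²`. Moving the
multiplier by `μ` changes `L` by the term `μᵀ(b - A z)`, affine in `z`, so by Young's inequality
maximality of `λ*` forces `μᵀr ≤ ‖Aᵀμ‖² / (4c)` for the residual `r = b - A x(λ*)` and every `μ`.
For `μ = ε r` this bounds a linear function of `ε` by a multiple of `ε²`, so `r = 0`. On the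
feasible set `L λ*` coincides with `f`, so the growth bound there gives both minimality and
uniqueness.
-/

namespace PerNode

variable {m n : Type*} [Fintype n]

/-- `f` exceeds its value at `x` by at least `c` times the squared Euclidean distance to `x`
(written as a dot product, since the norm of `n → ℝ` is the sup norm). -/
def HasQuadraticGrowth (c : ℝ) (f : (n → ℝ) → ℝ) (x : n → ℝ) : Prop :=
  ∀ z, f x + c * ((z - x) ⬝ᵥ (z - x)) ≤ f z

lemma dotProduct_self_eq_sum_sq (w : n → ℝ) : w ⬝ᵥ w = ∑ i, w i ^ 2 := by
  simp only [dotProduct, sq]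

lemma dotProduct_self_nonneg (w : n → ℝ) : 0 ≤ w ⬝ᵥ w := by
  simpa only [star_trivial] using dotProduct_star_self_nonneg w

lemma dotProduct_le_mul_add_div {c : ℝ} (hc : 0 < c) (g w : n → ℝ) :
    g ⬝ᵥ w ≤ c * (w ⬝ᵥ w) + (g ⬝ᵥ g) / (4 * c) := by
  have hsq := dotProduct_self_nonneg ((2 * c) • w - g)
  have hexpand : ((2 * c) • w - g) ⬝ᵥ ((2 * c) • w - g)
      = 4 * c * (c * (w ⬝ᵥ w) + (g ⬝ᵥ g) / (4 * c) - g ⬝ᵥ w) := by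
    simp only [sub_dotProduct, dotProduct_sub, smul_dotProduct, dotProduct_smul, smul_eq_mul,
      dotProduct_comm w g]
    field_simp
    ring
  have := nonneg_of_mul_nonneg_right (hexpand ▸ hsq) (by positivity)
  linarith

lemma eq_zero_of_forall_mul_le_sq_mul {a K : ℝ} (h : ∀ ε : ℝ, ε * a ≤ ε ^ 2 * K) : a = 0 := by
  have hdiscrim : discrim K (-a) 0 ≤ 0 := discrim_le_zero fun ε => by linarith [h ε]
  have hsq : a ^ 2 ≤ 0 := by simpa only [discrim, neg_sq, mul_zero, sub_zero] using hdiscrim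
  exact sq_nonpos_iff a |>.1 hsq

section Lagrangian

variable [Fintype m]

/-- The Lagrangian, with multiplier `lam`, of the problem of minimizing `f z` subject to
`A z = b`. -/
def lagrangian (f : (n → ℝ) → ℝ) (A : Matrix m n ℝ) (b lam : m → ℝ) (z : n → ℝ) : ℝ :=
  f z + lam ⬝ᵥ (b - A *ᵥ z)

variable {f : (n → ℝ) → ℝ} {A : Matrix m n ℝ} {b lam : m → ℝ} {c : ℝ} {x z : n → ℝ}

lemma lagrangian_of_mulVec_eq (hz : A *ᵥ z = b) : lagrangian f A b lam z = f z := by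
  rw [lagrangian, hz, sub_self, dotProduct_zero, add_zero]

lemma lagrangian_add (mu : m → ℝ) :
    lagrangian f A b (lam + mu) z = lagrangian f A b lam z + mu ⬝ᵥ (b - A *ᵥ z) := by
  simp only [lagrangian, add_dotProduct, add_assoc]

lemma dotProduct_residual_le_div (hc : 0 < c)
    (hgrowth : HasQuadraticGrowth c (lagrangian f A b lam) x)
    (hmax : ∀ lam', ∃ y, lagrangian f A b lam' y ≤ lagrangian f A b lam x) (mu : m → ℝ) :
    mu ⬝ᵥ (b - A *ᵥ x) ≤ ((Aᵀ *ᵥ mu) ⬝ᵥ (Aᵀ *ᵥ mu)) / (4 * c) := by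
  obtain ⟨y, hy⟩ := hmax (lam + mu)
  rw [lagrangian_add] at hy
  have hsplit : mu ⬝ᵥ (b - A *ᵥ y) = mu ⬝ᵥ (b - A *ᵥ x) - (Aᵀ *ᵥ mu) ⬝ᵥ (y - x) := by
    rw [mulVec_transpose, ← dotProduct_mulVec, ← dotProduct_sub, mulVec_sub, sub_sub,
      add_sub_cancel]
  linarith [hgrowth y, dotProduct_le_mul_add_div hc (Aᵀ *ᵥ mu) (y - x)]

theorem mulVec_eq_of_forall_exists_lagrangian_le (hc : 0 < c)
    (hgrowth : HasQuadraticGrowth c (lagrangian f A b lam) x)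
    (hmax : ∀ lam', ∃ y, lagrangian f A b lam' y ≤ lagrangian f A b lam x) :
    A *ᵥ x = b := by
  set r := b - A *ᵥ x
  suffices hrr : r ⬝ᵥ r = 0 from (sub_eq_zero.1 (dotProduct_self_eq_zero.1 hrr)).symm
  refine eq_zero_of_forall_mul_le_sq_mul (K := ((Aᵀ *ᵥ r) ⬝ᵥ (Aᵀ *ᵥ r)) / (4 * c)) fun ε => ?_
  calc ε * (r ⬝ᵥ r) = (ε • r) ⬝ᵥ r := by rw [smul_dotProduct, smul_eq_mul]
    _ ≤ ((Aᵀ *ᵥ (ε • r)) ⬝ᵥ (Aᵀ *ᵥ (ε • r))) / (4 * c) :=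
      dotProduct_residual_le_div hc hgrowth hmax (ε • r)
    _ = ε ^ 2 * (((Aᵀ *ᵥ r) ⬝ᵥ (Aᵀ *ᵥ r)) / (4 * c)) := by
      simp only [mulVec_smul, smul_dotProduct, dotProduct_smul, smul_eq_mul]
      ring

lemma HasQuadraticGrowth.add_le_of_mulVec_eq
    (hgrowth : HasQuadraticGrowth c (lagrangian f A b lam) x) (hx : A *ᵥ x = b) (hz : A *ᵥ z = b) :
    f x + c * ((z - x) ⬝ᵥ (z - x)) ≤ f z := by
  simpa only [lagrangian_of_mulVec_eq hx, lagrangian_of_mulVec_eq hz] using hgrowth z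

lemma HasQuadraticGrowth.le_of_mulVec_eq (hc : 0 ≤ c)
    (hgrowth : HasQuadraticGrowth c (lagrangian f A b lam) x) (hx : A *ᵥ x = b) (hz : A *ᵥ z = b) :
    f x ≤ f z := by
  linarith [hgrowth.add_le_of_mulVec_eq hx hz, mul_nonneg hc (dotProduct_self_nonneg (z - x))]

lemma HasQuadraticGrowth.eq_of_mulVec_eq_of_le (hc : 0 < c)
    (hgrowth : HasQuadraticGrowth c (lagrangian f A b lam) x) (hx : A *ᵥ x = b) (hz : A *ᵥ z = b)
    (hle : f z ≤ f x) : z = x := by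
  have hmul : c * ((z - x) ⬝ᵥ (z - x)) ≤ 0 := by linarith [hgrowth.add_le_of_mulVec_eq hx hz]
  have hzero : (z - x) ⬝ᵥ (z - x) = 0 :=
    le_antisymm (nonpos_of_mul_nonpos_right hmul hc) (dotProduct_self_nonneg (z - x))
  exact sub_eq_zero.1 (dotProduct_self_eq_zero.1 hzero)

end Lagrangian

section SoftThreshold

/-- The soft-thresholding operator, in the parametrization in which, for `0 < c`, it returns the
minimizer of `t ↦ |t| + u * t + c * t ^ 2`. -/
noncomputable def softThreshold (c u : ℝ) : ℝ :=
  if u < -1 then -(u + 1) / (2 * c) else if 1 < u then -(u - 1) / (2 * c) else 0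

variable {c : ℝ}

-- The two conclusions say that `-(u + 2 * c * s)` is a subgradient of `|·|` at `s`.
lemma softThreshold_optimality (hc : 0 < c) (u : ℝ) :
    |u + 2 * c * softThreshold c u| ≤ 1 ∧
      (u + 2 * c * softThreshold c u) * softThreshold c u = -|softThreshold c u| := by
  unfold softThreshold
  split_ifs with hneg hpos
  · have hs : 0 < -(u + 1) / (2 * c) := div_pos (by linarith) (by positivity)
    have hslope : u + 2 * c * (-(u + 1) / (2 * c)) = -1 := by field_simp; ring
    rw [hslope, abs_of_pos hs]
    norm_num
  · have hs : -(u - 1) / (2 * c) < 0 := div_neg_of_neg_of_pos (by linarith) (by positivity)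
    have hslope : u + 2 * c * (-(u - 1) / (2 * c)) = 1 := by field_simp; ring
    rw [hslope, abs_of_neg hs]
    norm_num
  · simpa using abs_le.2 ⟨not_lt.1 hneg, not_lt.1 hpos⟩

lemma abs_add_mul_add_sq_growth {u s : ℝ} (hslope : |u + 2 * c * s| ≤ 1)
    (hcompl : (u + 2 * c * s) * s = -|s|) (t : ℝ) :
    |s| + u * s + c * s ^ 2 + c * (t - s) ^ 2 ≤ |t| + u * t + c * t ^ 2 := by
  have hsubgradient : -((u + 2 * c * s) * t) ≤ |t| :=
    calc -((u + 2 * c * s) * t) ≤ |(u + 2 * c * s) * t| := neg_le_abs _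
      _ = |u + 2 * c * s| * |t| := abs_mul _ _
      _ ≤ |t| := mul_le_of_le_one_left (abs_nonneg t) hslope
  linarith

lemma softThreshold_growth (hc : 0 < c) (u t : ℝ) :
    |softThreshold c u| + u * softThreshold c u + c * softThreshold c u ^ 2
      + c * (t - softThreshold c u) ^ 2 ≤ |t| + u * t + c * t ^ 2 :=
  have ⟨hslope, hcompl⟩ := softThreshold_optimality hc u
  abs_add_mul_add_sq_growth hslope hcompl t

lemma iInf_abs_add_mul_add_sq (hc : 0 < c) (u : ℝ) :
    ⨅ t : ℝ, (|t| + u * t + c * t ^ 2)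
      = |softThreshold c u| + u * softThreshold c u + c * softThreshold c u ^ 2 := by
  refine IsLeast.csInf_eq ⟨⟨softThreshold c u, rfl⟩, ?_⟩
  rintro _ ⟨t, rfl⟩
  have : 0 ≤ c * (t - softThreshold c u) ^ 2 := by positivity
  linarith [softThreshold_growth hc u t]

end SoftThreshold

section Objective

variable [Fintype m]

/-- The per-node objective `‖z‖₁ + vᵀz + c‖z‖²`. -/
def objective (v : n → ℝ) (c : ℝ) (z : n → ℝ) : ℝ :=
  (∑ i, |z i|) + v ⬝ᵥ z + c * ∑ i, z i ^ 2

lemma lagrangian_objective (A : Matrix m n ℝ) (b lam : m → ℝ) (v : n → ℝ) (c : ℝ) (z : n → ℝ) :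
    lagrangian (objective v c) A b lam z
      = lam ⬝ᵥ b + ∑ i, (|z i| + (v - Aᵀ *ᵥ lam) i * z i + c * z i ^ 2) := by
  have hlinear : ∑ i, (v - Aᵀ *ᵥ lam) i * z i = v ⬝ᵥ z - lam ⬝ᵥ A *ᵥ z := by
    rw [dotProduct_mulVec, ← mulVec_transpose, ← sub_dotProduct, dotProduct]
  rw [sum_add_distrib, sum_add_distrib, hlinear, ← mul_sum, lagrangian, objective, dotProduct_sub]
  ring

variable {c : ℝ}

lemma lagrangian_objective_softThreshold (hc : 0 < c) (A : Matrix m n ℝ) (b lam : m → ℝ)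
    (v : n → ℝ) :
    lagrangian (objective v c) A b lam (fun i => softThreshold c ((v - Aᵀ *ᵥ lam) i))
      = lam ⬝ᵥ b + ∑ i, ⨅ t : ℝ, (|t| + (v - Aᵀ *ᵥ lam) i * t + c * t ^ 2) := by
  simp only [lagrangian_objective, iInf_abs_add_mul_add_sq hc]

lemma hasQuadraticGrowth_lagrangian_objective (hc : 0 < c) (A : Matrix m n ℝ) (b lam : m → ℝ)
    (v : n → ℝ) :
    HasQuadraticGrowth c (lagrangian (objective v c) A b lam)
      (fun i => softThreshold c ((v - Aᵀ *ᵥ lam) i)) := by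
  intro z
  rw [lagrangian_objective, lagrangian_objective, add_assoc, dotProduct_self_eq_sum_sq, mul_sum,
    ← sum_add_distrib]
  exact add_le_add le_rfl (sum_le_sum fun i _ => softThreshold_growth hc _ (z i))

end Objective

end PerNode

/-- Recovering the per-node primal solution from a dual maximizer: if `λ*` maximizes the
dual objective `λ ↦ λᵀb + Σᵢ inf_t (|t| + (v - Aᵀλ)ᵢ t + c t²)`, then the coordinatewise
soft-thresholding point `x(λ*)` is feasible (`A x(λ*) = b`) and is the unique minimizer
of `‖x‖₁ + vᵀx + c‖x‖²` over `{x : A x = b}`. -/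
theorem perNode_dual_maximizer_recovers_primal {m n : ℕ} (A : Matrix (Fin m) (Fin n) ℝ)
    (b : Fin m → ℝ) (v : Fin n → ℝ) (c : ℝ) (hc : 0 < c)
    (hfeas : ∃ x : Fin n → ℝ, A.mulVec x = b)
    (u : (Fin m → ℝ) → Fin n → ℝ) (hu : ∀ lam, u lam = v - Aᵀ.mulVec lam)
    (x : (Fin m → ℝ) → Fin n → ℝ)
    (hx : ∀ lam i, x lam i =
      if u lam i < -1 then -(u lam i + 1) / (2 * c)
      else if 1 < u lam i then -(u lam i - 1) / (2 * c) else 0)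
    (D : (Fin m → ℝ) → ℝ)
    (hD : ∀ lam, D lam = lam ⬝ᵥ b + ∑ i, ⨅ t : ℝ, (|t| + u lam i * t + c * t ^ 2))
    (lamstar : Fin m → ℝ) (hlamstar : ∀ lam : Fin m → ℝ, D lam ≤ D lamstar) :
    A.mulVec (x lamstar) = b ∧
    (∀ z : Fin n → ℝ, A.mulVec z = b →
      (∑ i, |x lamstar i|) + v ⬝ᵥ x lamstar + c * (∑ i, (x lamstar i) ^ 2)
        ≤ (∑ i, |z i|) + v ⬝ᵥ z + c * (∑ i, (z i) ^ 2)) ∧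
    (∀ z : Fin n → ℝ,
      (A.mulVec z = b ∧ ∀ w : Fin n → ℝ, A.mulVec w = b →
        (∑ i, |z i|) + v ⬝ᵥ z + c * (∑ i, (z i) ^ 2)
          ≤ (∑ i, |w i|) + v ⬝ᵥ w + c * (∑ i, (w i) ^ 2)) →
      z = x lamstar) := by
  obtain rfl : u = fun lam => v - Aᵀ *ᵥ lam := funext hu
  obtain rfl : x = fun lam i => PerNode.softThreshold c ((v - Aᵀ *ᵥ lam) i) := funext₂ hx
  have hgrowth := PerNode.hasQuadraticGrowth_lagrangian_objective hc A b lamstar v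
  have hfeasible := PerNode.mulVec_eq_of_forall_exists_lagrangian_le hc hgrowth fun lam =>
    ⟨fun i => PerNode.softThreshold c ((v - Aᵀ *ᵥ lam) i), by
      simpa only [PerNode.lagrangian_objective_softThreshold hc, ← hD] using hlamstar lam⟩
  exact ⟨hfeasible, fun z hz => hgrowth.le_of_mulVec_eq hc.le hfeasible hz,
    fun z ⟨hz, hmin⟩ => hgrowth.eq_of_mulVec_eq_of_le hc hfeasible hz (hmin _ hfeasible)⟩
end
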